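/- Let A be an n × n symmetric matrix with integer entries such that (i) det A = 1 or det A = -1, (ii) every diagonal entry of A is even, and (iii) the signature of A is zero, where the signature is the number of positive eigenvalues minus the number of negative eigenvalues of A regarded as a real symmetric matrix. Then n is even, say n = 2m, and A is integrally congruent to the block-diagonal direct sum of m copies of the 2 × 2 matrix [[0,1],[1,0]]; that is, there exists an n × n integer matrix P with det P = ±1 such that Pᵀ A P equals this direct sum. -/

import Mathlib

/-- The block-diagonal direct sum of `n/2` copies of the hyperbolic plane
matrix `[[0,1],[1,0]]`, as an `n × n` integer matrix: the `k`-th diagonal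
`2 × 2` block occupies rows/columns `2k, 2k+1`. -/
def hyperbolicSum (n : ℕ) : Matrix (Fin n) (Fin n) ℤ :=
  fun i j => if (i : ℕ) / 2 = (j : ℕ) / 2 ∧ (i : ℕ) ≠ (j : ℕ) then 1 else 0

open Module in
theorem orth_le {K F : Type*} [Field K] [AddCommGroup F] [Module K F] [FiniteDimensional K F]
    (β : F →ₗ[K] F →ₗ[K] K) (hβ : Function.Injective β) (U V : Submodule K F)
    (h : ∀ u ∈ U, ∀ v ∈ V, β u v = 0) : finrank K U + finrank K V ≤ finrank K F := by
  have h1 : finrank K U ≤ finrank K V.dualAnnihilator := by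
    have : U.map β ≤ V.dualAnnihilator := by
      rintro _ ⟨u, hu, rfl⟩
      rw [Submodule.mem_dualAnnihilator]
      exact fun v hv => h u hu v hv
    rw [(Submodule.equivMapOfInjective β hβ U).finrank_eq]
    exact Submodule.finrank_mono this
  have h2 := Subspace.finrank_add_finrank_dualAnnihilator_eq V
  omega

def wq {ι : Type} [Fintype ι] (a : ι → ℚ) (x : ι → ℚ) : ℚ := ∑ i, a i * x i ^ 2

def WE {ι κ : Type} [Fintype ι] [Fintype κ] (a : ι → ℚ) (b : κ → ℚ) : Prop :=
  ∃ I : Submodule ℚ ((ι → ℚ) × (κ → ℚ)), (∀ z ∈ I, wq a z.1 = wq b z.2) ∧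
    Fintype.card ι + Fintype.card κ ≤ 2 * Module.finrank ℚ I

theorem WE.of_map {ι κ : Type} [Fintype ι] [Fintype κ] {a : ι → ℚ} {b : κ → ℚ}
    (T : (ι → ℚ) →ₗ[ℚ] (κ → ℚ)) (hT : ∀ x, wq b (T x) = wq a x)
    (hc : Fintype.card κ ≤ Fintype.card ι) : WE a b := by
  refine ⟨LinearMap.range (LinearMap.prod LinearMap.id T), ?_, ?_⟩
  · rintro _ ⟨x, rfl⟩
    simp [hT]
  · rw [LinearMap.finrank_range_of_inj]
    · simp; omega
    · intro x y h
      simpa using congrArg Prod.fst h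

theorem WE.symm {ι κ : Type} [Fintype ι] [Fintype κ] {a : ι → ℚ} {b : κ → ℚ}
    (h : WE a b) : WE b a := by
  obtain ⟨I, h1, h2⟩ := h
  refine ⟨I.map (LinearEquiv.prodComm ℚ (ι → ℚ) (κ → ℚ)).toLinearMap, ?_, ?_⟩
  · rintro _ ⟨x, hx, rfl⟩
    simp [h1 x hx]
  · rw [LinearEquiv.finrank_map_eq]
    omega

theorem WE.reindex {ι κ : Type} [Fintype ι] [Fintype κ] {a : ι → ℚ} {b : κ → ℚ}
    (e : ι ≃ κ) (h : ∀ i, a i = b (e i)) : WE a b := by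
  refine WE.of_map (LinearMap.funLeft ℚ ℚ e.symm) ?_ (Fintype.card_congr e).ge
  intro x
  unfold wq
  rw [← e.sum_comp]
  simp [LinearMap.funLeft, h]

theorem WE.refl {ι : Type} [Fintype ι] (a : ι → ℚ) : WE a a := WE.reindex (Equiv.refl _) (by simp)

theorem wq_zero {ι : Type} [Fintype ι] (a : ι → ℚ) : wq a 0 = 0 := by simp [wq]

theorem wq_polar {ι : Type} [Fintype ι] (a : ι → ℚ) (x y : ι → ℚ) :
    wq a (x + y) = wq a x + wq a y + 2 * ∑ i, a i * x i * y i := by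
  unfold wq
  rw [Finset.mul_sum, ← Finset.sum_add_distrib, ← Finset.sum_add_distrib]
  refine Finset.sum_congr rfl fun i _ => ?_
  simp; ring

def wbil {ι : Type} [Fintype ι] (a : ι → ℚ) : (ι → ℚ) →ₗ[ℚ] (ι → ℚ) →ₗ[ℚ] ℚ :=
  LinearMap.mk₂ ℚ (fun x y => ∑ i, a i * x i * y i)
    (by intros; simp only [← Finset.sum_add_distrib]; refine Finset.sum_congr rfl fun i _ => ?_
        simp; ring)
    (by intros; simp only [Finset.smul_sum]; refine Finset.sum_congr rfl fun i _ => ?_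
        simp; ring)
    (by intros; simp only [← Finset.sum_add_distrib]; refine Finset.sum_congr rfl fun i _ => ?_
        simp; ring)
    (by intros; simp only [Finset.smul_sum]; refine Finset.sum_congr rfl fun i _ => ?_
        simp; ring)

theorem wbil_inj {ι : Type} [Fintype ι] (a : ι → ℚ) (ha : ∀ i, a i ≠ 0) :
    Function.Injective (wbil a) := by
  classical
  rw [injective_iff_map_eq_zero]
  intro x hx
  ext i
  have := congrArg (fun f => f (Pi.single i 1)) hx
  simpa [wbil, Pi.single_apply, ha i] using this

open Module in
theorem WE.trans {ι κ μ : Type} [Fintype ι] [Fintype κ] [Fintype μ]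
    {a : ι → ℚ} {b : κ → ℚ} {c : μ → ℚ} (hb : ∀ i, b i ≠ 0)
    (h1 : WE a b) (h2 : WE b c) : WE a c := by
  obtain ⟨I, hI, hId⟩ := h1
  obtain ⟨J, hJ, hJd⟩ := h2
  let φ : (I × J) →ₗ[ℚ] (κ → ℚ) :=
    (LinearMap.snd ℚ _ _ ∘ₗ I.subtype).coprod (-(LinearMap.fst ℚ _ _ ∘ₗ J.subtype))
  have hφ : ∀ z, φ z = z.1.1.2 - z.2.1.1 := by intro z; simp [φ, sub_eq_add_neg]
  let T := LinearMap.ker φ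
  let ψ0 : (I × J) →ₗ[ℚ] (ι → ℚ) × (μ → ℚ) :=
    LinearMap.prodMap (LinearMap.fst ℚ _ _ ∘ₗ I.subtype) (LinearMap.snd ℚ _ _ ∘ₗ J.subtype)
  let ψ := ψ0 ∘ₗ T.subtype
  have hT : ∀ z : T, z.1.1.1.2 = z.1.2.1.1 := by
    intro z
    have := z.2
    rw [LinearMap.mem_ker, hφ] at this
    exact sub_eq_zero.mp this
  refine ⟨LinearMap.range ψ, ?_, ?_⟩
  · rintro _ ⟨z, rfl⟩
    have := hT z
    have e1 := hI _ z.1.1.2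
    have e2 := hJ _ z.1.2.2
    simp only [ψ, ψ0, LinearMap.comp_apply, LinearMap.prodMap_apply, Submodule.subtype_apply,
      LinearMap.fst_apply, LinearMap.snd_apply]
    rw [e1, this, e2]
  · have r1 := LinearMap.finrank_range_add_finrank_ker (K := ℚ) (V := T) (V₂ := (ι → ℚ) × (μ → ℚ)) ψ
    have r2 := LinearMap.finrank_range_add_finrank_ker φ
    let χ0 : (I × J) →ₗ[ℚ] (κ → ℚ) := LinearMap.snd ℚ _ _ ∘ₗ I.subtype ∘ₗ LinearMap.fst ℚ I J
    let χ : LinearMap.ker ψ →ₗ[ℚ] (κ → ℚ) := χ0 ∘ₗ T.subtype ∘ₗ (LinearMap.ker ψ).subtype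
    have hk : ∀ z : LinearMap.ker ψ, z.1.1.1.1.1 = 0 ∧ z.1.1.2.1.2 = 0 := by
      intro z
      have := z.2
      rw [LinearMap.mem_ker] at this
      exact ⟨congrArg Prod.fst this, congrArg Prod.snd this⟩
    have hχi : Function.Injective χ := by
      intro z w hz
      have hz' : z.1.1.1.1.2 = w.1.1.1.1.2 := hz
      have hz2 : z.1.1.2.1.1 = w.1.1.2.1.1 := by rw [← hT z.1, ← hT w.1, hz']
      ext1; ext1
      refine Prod.ext ?_ ?_
      · ext1; exact Prod.ext ((hk z).1.trans (hk w).1.symm) hz'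
      · ext1; exact Prod.ext hz2 ((hk z).2.trans (hk w).2.symm)
    have r3 := orth_le (wbil b) (wbil_inj b hb) (LinearMap.range χ) (LinearMap.range φ) (by
      rintro _ ⟨z, rfl⟩ _ ⟨w, rfl⟩
      rw [hφ, map_sub, sub_eq_zero]
      have p1 : wbil b (χ z) w.1.1.2 = 0 := by
        have e1 := hI _ (z.1.1.1 + w.1).2
        have e2 := hI _ z.1.1.1.2
        have e3 := hI _ w.1.2
        rw [(hk z).1, wq_zero] at e2
        simp only [Submodule.coe_add, Prod.fst_add, Prod.snd_add, (hk z).1, zero_add] at e1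
        rw [wq_polar, ← e2, e3] at e1
        simp at e1
        exact e1
      have p2 : wbil b (χ z) w.2.1.1 = 0 := by
        have e1 := hJ _ (z.1.1.2 + w.2).2
        have e2 := hJ _ z.1.1.2.2
        have e3 := hJ _ w.2.2
        rw [(hk z).2, wq_zero] at e2
        simp only [Submodule.coe_add, Prod.fst_add, Prod.snd_add, (hk z).2, zero_add] at e1
        rw [wq_polar, e2, e3] at e1
        simp at e1
        rw [← hT z.1] at e1
        exact e1
      rw [p1, p2])
    rw [LinearMap.finrank_range_of_inj hχi] at r3
    simp only [finrank_prod, finrank_fintype_fun_eq_card] at r1 r2 r3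
    have : finrank ℚ T = finrank ℚ (LinearMap.ker φ) := rfl
    omega

theorem wq_sum {ι κ : Type} [Fintype ι] [Fintype κ] (a : ι → ℚ) (b : κ → ℚ) (x) :
    wq (Sum.elim a b) x = wq a (x ∘ Sum.inl) + wq b (x ∘ Sum.inr) := by
  simp [wq]

theorem WE.add {ι κ ι' κ' : Type} [Fintype ι] [Fintype κ] [Fintype ι'] [Fintype κ']
    {a : ι → ℚ} {b : κ → ℚ} {a' : ι' → ℚ} {b' : κ' → ℚ} (h : WE a b) (h' : WE a' b') :
    WE (Sum.elim a a') (Sum.elim b b') := by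
  obtain ⟨I, hI, hId⟩ := h
  obtain ⟨J, hJ, hJd⟩ := h'
  let e := LinearEquiv.prodProdProdComm ℚ (ι → ℚ) (κ → ℚ) (ι' → ℚ) (κ' → ℚ)
  let f := LinearEquiv.prodCongr (LinearEquiv.sumArrowLequivProdArrow ι ι' ℚ ℚ).symm
    (LinearEquiv.sumArrowLequivProdArrow κ κ' ℚ ℚ).symm
  refine ⟨LinearMap.range ((e.trans f).toLinearMap ∘ₗ
    LinearMap.prodMap I.subtype J.subtype), ?_, ?_⟩
  · rintro _ ⟨⟨z, w⟩, rfl⟩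
    have e1 := hI _ z.2
    have e2 := hJ _ w.2
    rw [wq_sum, wq_sum]
    exact congrArg₂ (· + ·) e1 e2
  · rw [LinearMap.finrank_range_of_inj]
    · simp; omega
    · rw [LinearMap.coe_comp]
      refine (e.trans f).injective.comp ?_
      rw [LinearMap.coe_prodMap]
      exact Prod.map_injective.mpr ⟨I.subtype_injective, J.subtype_injective⟩


structure WObj : Type 1 where
  ι : Type
  ft : Fintype ι
  a : ι → ℚ
  ne : ∀ i, a i ≠ 0

instance (x : WObj) : Fintype x.ι := x.ft

instance wSetoid : Setoid WObj where
  r x y := WE x.a y.a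
  iseqv := ⟨fun x => WE.refl x.a, fun h => h.symm, fun {_ y _} h h' => WE.trans y.ne h h'⟩

def Wg : Type 1 := Quotient wSetoid

def WObj.add (x y : WObj) : WObj := ⟨x.ι ⊕ y.ι, inferInstance, Sum.elim x.a y.a, by
  rintro (i | i)
  · exact x.ne i
  · exact y.ne i⟩

def WObj.neg (x : WObj) : WObj := ⟨x.ι, inferInstance, fun i => - x.a i, fun i => neg_ne_zero.mpr (x.ne i)⟩

def WObj.zero : WObj := ⟨Empty, inferInstance, fun _ => 1, fun _ => one_ne_zero⟩

theorem WE.neg {ι κ : Type} [Fintype ι] [Fintype κ] {a : ι → ℚ} {b : κ → ℚ}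
    (h : WE a b) : WE (fun i => - a i) (fun i => - b i) := by
  obtain ⟨I, h1, h2⟩ := h
  refine ⟨I, fun z hz => ?_, h2⟩
  have := h1 z hz
  simp only [wq, neg_mul, Finset.sum_neg_distrib] at this ⊢
  rw [this]

theorem WE.cancel {ι : Type} [Fintype ι] (a : ι → ℚ) (b : Empty → ℚ) :
    WE (Sum.elim (fun i => - a i) a) b := by
  refine ⟨LinearMap.range (LinearMap.prod (((LinearEquiv.sumArrowLequivProdArrow ι ι ℚ ℚ).symm.toLinearMap) ∘ₗ
    (LinearMap.prod LinearMap.id LinearMap.id)) (0 : (ι → ℚ) →ₗ[ℚ] (Empty → ℚ))), ?_, ?_⟩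
  · rintro _ ⟨x, rfl⟩
    simp [wq]
  · rw [LinearMap.finrank_range_of_inj]
    · simp; omega
    · intro x y h
      have := congrArg Prod.fst h
      simp only [LinearMap.prod_apply, Function.prod, LinearMap.comp_apply, LinearEquiv.coe_coe, EmbeddingLike.apply_eq_iff_eq] at this
      exact congrArg Prod.fst this

instance : Zero Wg := ⟨Quotient.mk _ WObj.zero⟩
instance : Add Wg := ⟨Quotient.map₂ WObj.add fun _ _ h _ _ h' => WE.add h h'⟩
instance : Neg Wg := ⟨Quotient.map WObj.neg fun _ _ h => WE.neg h⟩

instance : AddCommGroup Wg where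
  add_assoc := by
    rintro ⟨x⟩ ⟨y⟩ ⟨z⟩
    refine Quotient.sound (WE.reindex (Equiv.sumAssoc _ _ _) ?_)
    rintro ((i | i) | i) <;> rfl
  zero_add := by
    rintro ⟨x⟩
    refine Quotient.sound (WE.reindex (Equiv.emptySum Empty _) ?_)
    rintro (i | i)
    · exact i.elim
    · rfl
  add_zero := by
    rintro ⟨x⟩
    refine Quotient.sound (WE.reindex (Equiv.sumEmpty _ Empty) ?_)
    rintro (i | i)
    · rfl
    · exact i.elim
  add_comm := by
    rintro ⟨x⟩ ⟨y⟩
    refine Quotient.sound (WE.reindex (Equiv.sumComm _ _) ?_)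
    rintro (i | i) <;> rfl
  neg_add_cancel := by
    rintro ⟨x⟩
    exact Quotient.sound (WE.cancel x.a _)
  nsmul := nsmulRec
  zsmul := zsmulRec

def wmk {ι : Type} [Fintype ι] (a : ι → ℚ) (h : ∀ i, a i ≠ 0) : Wg :=
  Quotient.mk _ ⟨ι, inferInstance, a, h⟩

theorem wmk_eq_iff {ι κ : Type} [Fintype ι] [Fintype κ] {a : ι → ℚ} {b : κ → ℚ} (ha hb) :
    wmk a ha = wmk b hb ↔ WE a b := Quotient.eq

open Classical in
noncomputable def wg (a : ℚ) : Wg := if h : a ≠ 0 then wmk (fun _ : Unit => a) (fun _ => h) else 0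

theorem wg_of {a : ℚ} (h : a ≠ 0) : wg a = wmk (fun _ : Unit => a) (fun _ => h) := dif_pos h

theorem wmk_fin (n : ℕ) (a : Fin n → ℚ) (h : ∀ i, a i ≠ 0) : wmk a h = ∑ i, wg (a i) := by
  induction n with
  | zero =>
    rw [Fin.sum_univ_zero]
    exact Quotient.sound (WE.reindex (Equiv.equivOfIsEmpty (Fin 0) Empty) (fun i => i.elim0))
  | succ n ih =>
    rw [Fin.sum_univ_succ, ← ih (fun i => a i.succ) (fun i => h _), wg_of (h 0)]
    refine Quotient.sound (WE.symm (WE.reindex ((Equiv.sumComm _ _).trans ((Equiv.optionEquivSumPUnit _).symm.trans (finSuccEquiv n).symm)) ?_))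
    rintro (i | i)
    · rfl
    · rfl

theorem wmk_sum {ι : Type} [Fintype ι] (a : ι → ℚ) (h : ∀ i, a i ≠ 0) : wmk a h = ∑ i, wg (a i) := by
  let e := Fintype.equivFin ι
  rw [← e.symm.sum_comp, ← wmk_fin _ (fun i => a (e.symm i)) (fun i => h _)]
  rw [wmk_eq_iff]
  exact WE.reindex e (by simp)

theorem wg_eq_iff {ι κ : Type} [Fintype ι] [Fintype κ] (a : ι → ℚ) (b : κ → ℚ)
    (ha : ∀ i, a i ≠ 0) (hb : ∀ i, b i ≠ 0) :
    ∑ i, wg (a i) = ∑ i, wg (b i) ↔ WE a b := by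
  rw [← wmk_sum a ha, ← wmk_sum b hb, wmk_eq_iff]

theorem wg_neg (a : ℚ) : wg (-a) = - wg a := by
  by_cases h : a = 0
  · simp [wg, h]
  · rw [wg_of h, wg_of (neg_ne_zero.mpr h)]; rfl

theorem wg_sq (a b : ℚ) (hb : b ≠ 0) : wg (a * b ^ 2) = wg a := by
  by_cases h : a = 0
  · simp [h]
  · rw [wg_of h, wg_of (by positivity), wmk_eq_iff]
    refine WE.of_map (b • LinearMap.id) ?_ le_rfl
    intro x
    simp [wq]; ring

theorem wg_add (a b : ℚ) (ha : a ≠ 0) (hb : b ≠ 0) (hab : a + b ≠ 0) :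
    wg a + wg b = wg (a + b) + wg (a * b * (a + b)) := by
  have := (wg_eq_iff ![a + b, a * b * (a + b)] ![a, b] (by simp [Fin.forall_fin_two, ha, hb, hab])
    (by simp [Fin.forall_fin_two, ha, hb])).mpr ?_
  · simpa using this.symm
  · refine WE.of_map (Matrix.mulVecLin !![1, b; 1, -a]) ?_ le_rfl
    intro x
    simp [wq, Fin.sum_univ_two, Matrix.mulVec, dotProduct]; ring


section reduction
variable {F G : Type*} [Field F] [AddCommGroup G] (ψ : F → G)
  (hsq : ∀ a x, a ≠ 0 → x ≠ 0 → ψ (a * x ^ 2) = ψ a)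
  (hneg : ∀ a, a ≠ 0 → ψ (-a) = - ψ a)
  (hadd : ∀ a b, a ≠ 0 → b ≠ 0 → a + b ≠ 0 → ψ a + ψ b = ψ (a + b) + ψ (a * b * (a + b)))

include hneg hadd in
theorem red_zero_sum (n : ℕ) : ∀ t : List F, t.length = n → (∀ a ∈ t, a ≠ 0) → t ≠ [] → t.sum = 0 →
    ∃ t' : List F, t'.length < t.length ∧ (∀ a ∈ t', a ≠ 0) ∧ (t'.map ψ).sum = (t.map ψ).sum := by
  induction n with
  | zero => intro t h1 _ h3; simp at h1; exact absurd h1 h3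
  | succ n ih =>
    intro t h1 h2 h3 h4
    match t, h1, h2, h3, h4 with
    | [a], _, h2, _, h4 => simp at h2 h4; exact absurd h4 h2
    | a :: b :: r, h1, h2, _, h4 =>
      simp only [List.mem_cons, forall_eq_or_imp] at h2
      obtain ⟨ha, hb, hr⟩ := h2
      by_cases hab : a + b = 0
      · refine ⟨r, by simp, hr, ?_⟩
        have : b = -a := by linear_combination hab
        simp [this, hneg a ha]
      · obtain ⟨t', e1, e2, e3⟩ := ih ((a + b) :: r) (by simpa using h1)
          (by simpa [hab] using hr) (by simp) (by simpa [add_assoc] using h4)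
        refine ⟨(a * b * (a + b)) :: t', by simpa using e1, ?_, ?_⟩
        · simp only [List.mem_cons, forall_eq_or_imp]
          exact ⟨mul_ne_zero (mul_ne_zero ha hb) hab, e2⟩
        · simp only [List.map_cons, List.sum_cons, e3]
          rw [← add_assoc, ← add_assoc, hadd a b ha hb hab]
          abel

def Aniso {k : ℕ} (c : Fin k → F) : Prop := ∀ x : Fin k → F, ∑ i, c i * x i ^ 2 = 0 → x = 0

include hsq hneg hadd in
theorem red_aniso (n : ℕ) : ∀ l : List F, l.length = n → (∀ a ∈ l, a ≠ 0) →
    ∃ (k : ℕ) (c : Fin k → F), (∀ i, c i ≠ 0) ∧ Aniso c ∧ ∑ i, ψ (c i) = (l.map ψ).sum := by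
  classical
  induction n using Nat.strong_induction_on with
  | _ n ih =>
  intro l hl h0
  by_cases hA : Aniso l.get
  · exact ⟨l.length, l.get, fun i => h0 _ (l.get_mem i), hA, by
      simp⟩
  · unfold Aniso at hA
    push Not at hA
    obtain ⟨x, hx, hx0⟩ := hA
    let s : Finset (Fin l.length) := Finset.univ.filter fun i => x i ≠ 0
    have hcc : s.card + sᶜ.card = l.length := by rw [Finset.card_add_card_compl, Fintype.card_fin]
    let t := s.toList.map fun i => l.get i * x i ^ 2
    let u := sᶜ.toList.map l.get
    have hne : ∀ i, l.get i ≠ 0 := fun i => h0 _ (l.get_mem i)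
    obtain ⟨t', e1, e2, e3⟩ := red_zero_sum ψ hneg hadd t.length t rfl (by
        simp only [t, List.mem_map, Finset.mem_toList]
        rintro _ ⟨i, hi, rfl⟩
        exact mul_ne_zero (hne i) (pow_ne_zero 2 (by simpa [s] using hi)))
      (by
        obtain ⟨i, hi⟩ := Function.ne_iff.mp hx0
        simp only [t, ne_eq, List.map_eq_nil_iff, Finset.toList_eq_nil]
        exact Finset.ne_empty_of_mem (a := i) (by simpa [s] using hi))
      (by
        simp only [t, Finset.sum_map_toList]
        rw [← hx, Finset.sum_filter]
        refine Finset.sum_congr rfl fun i _ => ?_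
        by_cases h : x i = 0 <;> simp [h])
    obtain ⟨k, c, g1, g2, g3⟩ := ih (t' ++ u).length (by
        have : s.card + sᶜ.card = l.length := by simp [Finset.card_add_card_compl]
        simp [t, u] at e1 ⊢
        simp at this
        omega) (t' ++ u) rfl (by
        intro a ha
        rcases List.mem_append.mp ha with h | h
        · exact e2 a h
        · simp only [u, List.mem_map] at h
          obtain ⟨i, -, rfl⟩ := h
          exact hne i)
    refine ⟨k, c, g1, g2, ?_⟩
    rw [g3, List.map_append, List.sum_append, e3]
    have h1 : (t.map ψ).sum = ∑ i ∈ s, ψ (l.get i) := by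
      simp only [t, List.map_map, Finset.sum_map_toList]
      refine Finset.sum_congr rfl fun i hi => ?_
      exact hsq _ _ (hne i) (by simpa [s] using hi)
    have h2 : (u.map ψ).sum = ∑ i ∈ sᶜ, ψ (l.get i) := by
      simp only [u, List.map_map, Finset.sum_map_toList]
      rfl
    rw [h1, h2, Finset.sum_add_sum_compl]
    simp
end reduction

def Smooth (p : ℕ) (u : ℤ) : Prop := u ≠ 0 ∧ ∀ q : ℕ, q.Prime → (q : ℤ) ∣ u → q < p

theorem Smooth.mul {p u v} (hu : Smooth p u) (hv : Smooth p v) : Smooth p (u * v) := by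
  refine ⟨mul_ne_zero hu.1 hv.1, fun q hq h => ?_⟩
  rcases (Nat.prime_iff_prime_int.mp hq).dvd_or_dvd h with h | h
  · exact hu.2 q hq h
  · exact hv.2 q hq h

theorem Smooth.of_mul {p u v} (h : Smooth p (u * v)) : Smooth p v :=
  ⟨right_ne_zero_of_mul h.1, fun q hq hd => h.2 q hq (Dvd.dvd.mul_left hd u)⟩

theorem Smooth.neg {p u} (hu : Smooth p u) : Smooth p (-u) :=
  ⟨neg_ne_zero.mpr hu.1, fun q hq h => hu.2 q hq ((dvd_neg).mp h)⟩

theorem Smooth.of_lt {p : ℕ} {u : ℤ} (h0 : u ≠ 0) (h : |u| < p) : Smooth p u := by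
  refine ⟨h0, fun q hq hd => ?_⟩
  have := Int.le_of_dvd (abs_pos.mpr h0) ((dvd_abs _ _).mpr hd)
  omega

theorem Smooth.not_dvd {p u} (hp : p.Prime) (hu : Smooth p u) : ¬ (p : ℤ) ∣ u :=
  fun h => lt_irrefl _ (hu.2 p hp h)

noncomputable def Lw (p : ℕ) : AddSubgroup Wg := AddSubgroup.closure {x | ∃ u : ℤ, Smooth p u ∧ x = wg u}

theorem mem_Lw {p : ℕ} {u : ℤ} (h : Smooth p u) : wg u ∈ Lw p := AddSubgroup.subset_closure ⟨u, h, rfl⟩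

noncomputable def fw (p : ℕ) (u : ℤ) : Wg ⧸ Lw p := QuotientAddGroup.mk (wg ((p : ℚ) * u))

theorem fw_T0 {p : ℕ} (hp : p.Prime) {n1 n2 r v : ℤ} (h1 : n1 ≠ 0) (h1' : |n1| < p) (h2 : n2 ≠ 0)
    (h2' : |n2| < p) (hr : r ≠ 0) (hr' : |r| < p) (hd : (p : ℤ) ∣ n1 * n2 - r) (hv : Smooth p v) :
    fw p (n1 * n2 * v) = fw p (r * v) := by
  obtain ⟨l, hl⟩ := hd
  have hp0 : (0 : ℤ) < p := by exact_mod_cast hp.pos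
  have hpq : (p : ℚ) ≠ 0 := by exact_mod_cast hp.ne_zero
  by_cases hl0 : l = 0
  · have : n1 * n2 = r := by rw [hl0] at hl; linarith
    rw [this]
  have hl' : |l| < p := by
    have e1 : |(p : ℤ) * l| ≤ |n1| * |n2| + |r| := by
      rw [← hl, ← abs_mul]; exact abs_sub _ _
    rw [abs_mul, abs_of_pos hp0] at e1
    have e2 : |n1| * |n2| ≤ ((p : ℤ) - 1) * (p - 1) :=
      mul_le_mul (by omega) (by omega) (abs_nonneg _) (by omega)
    nlinarith
  have hn : n1 * n2 = r + p * l := by linarith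
  have key := wg_add ((p : ℚ) * (r * v)) (p ^ 2 * (l * v))
    (by have := hv.1; positivity) (by have := hv.1; positivity) (by
      have : ((p : ℚ) * (r * v)) + (p ^ 2 * (l * v)) = p * ((n1 * n2 * v : ℤ) : ℚ) := by
        rw [hn]; push_cast; ring
      rw [this]
      have := hv.1
      positivity)
  have e1 : ((p : ℚ) * (r * v)) + (p ^ 2 * (l * v)) = p * ((n1 * n2 * v : ℤ) : ℚ) := by
    rw [hn]; push_cast; ring
  rw [e1] at key
  have e2 : ((p : ℚ) ^ 2 * (l * v)) = ((l * v : ℤ) : ℚ) * p ^ 2 := by push_cast; ring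
  have e3 : (p : ℚ) * (r * v) * (p ^ 2 * (l * v)) * (p * ((n1 * n2 * v : ℤ) : ℚ)) =
    ((r * l * n1 * n2 * v : ℤ) : ℚ) * (p ^ 2 * v) ^ 2 := by push_cast; ring
  rw [e3, wg_sq _ _ (by have := hv.1; positivity), e2, wg_sq _ _ hpq] at key
  have m1 : wg ((l * v : ℤ) : ℚ) ∈ Lw p := mem_Lw ((Smooth.of_lt hl0 hl').mul hv)
  have m2 : wg ((r * l * n1 * n2 * v : ℤ) : ℚ) ∈ Lw p :=
    mem_Lw (((((Smooth.of_lt hr hr').mul (Smooth.of_lt hl0 hl')).mul (Smooth.of_lt h1 h1')).mul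
      (Smooth.of_lt h2 h2')).mul hv)
  unfold fw
  rw [QuotientAddGroup.eq]
  have : -wg ((p : ℚ) * ((n1 * n2 * v : ℤ) : ℚ)) + wg ((p : ℚ) * ((r * v : ℤ) : ℚ)) =
      wg ((r * l * n1 * n2 * v : ℤ) : ℚ) - wg ((l * v : ℤ) : ℚ) := by
    have e4 : ((r * v : ℤ) : ℚ) = r * v := by push_cast; rfl
    rw [e4, neg_add_eq_iff_eq_add, ← add_sub_assoc, ← key]
    abel
  rw [this]
  exact sub_mem m2 m1

theorem fw_T1_nat {p : ℕ} (hp : p.Prime) (n : ℕ) : Smooth p n → ∀ v r : ℤ, Smooth p v → r ≠ 0 →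
    |r| < p → (p : ℤ) ∣ n - r → fw p (n * v) = fw p (r * v) := by
  have hp1 := hp.one_lt
  induction n using induction_on_primes with
  | zero => intro h; exact absurd rfl h.1
  | one =>
    intro _ v r hv hr hr' hd
    have := fw_T0 hp (n1 := 1) (n2 := 1) one_ne_zero (by simpa using hp1) one_ne_zero
      (by simpa using hp1) hr hr' (by simpa using hd) hv
    simpa using this
  | prime_mul q m hq ih =>
    intro h v r hv hr hr' hd
    have hm : Smooth p m := by push_cast at h; exact h.of_mul
    have hqs : Smooth p q := by push_cast at h; rw [mul_comm] at h; exact h.of_mul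
    have hqp : q < p := hqs.2 q hq dvd_rfl
    have hp0 : (0 : ℤ) < p := by exact_mod_cast hp.pos
    have c1 : (m : ℤ) % p ≠ 0 := fun h0 => hm.not_dvd hp (Int.dvd_of_emod_eq_zero h0)
    have c2 : |(m : ℤ) % p| < p := by
      rw [abs_of_nonneg (Int.emod_nonneg _ hp0.ne')]; exact Int.emod_lt_of_pos _ hp0
    have c3 : (p : ℤ) ∣ m - m % p := Int.dvd_self_sub_emod
    have a1 := ih hm (q * v) _ (hqs.mul hv) c1 c2 c3
    have a2 := fw_T0 hp (n2 := q) (r := r) c1 c2 hqs.1 (by simpa using hqp) hr hr' (by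
      have : (m : ℤ) % p * q - r = (((q * m : ℕ) : ℤ) - r) - (m - m % p) * q := by push_cast; ring
      rw [this]
      exact dvd_sub hd (Dvd.dvd.mul_right c3 _)) hv
    rw [← a2, mul_assoc, ← a1]
    congr 1; push_cast; ring

theorem fw_T1 {p : ℕ} (hp : p.Prime) {u r : ℤ} (hu : Smooth p u) (hr : r ≠ 0)
    (hr' : |r| < p) (hd : (p : ℤ) ∣ u - r) : fw p u = fw p r := by
  have h1 : Smooth p 1 := Smooth.of_lt one_ne_zero (by simpa using hp.one_lt)
  rcases Int.natAbs_eq u with h | h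
  · have := fw_T1_nat hp u.natAbs (by rwa [← h]) 1 r h1 hr hr' (by rwa [← h])
    rw [← h] at this
    simpa using this
  · have hs : Smooth p (u.natAbs : ℤ) := by
      have := hu.neg
      rwa [h, neg_neg] at this
    have := fw_T1_nat hp u.natAbs hs (-1) (-r) h1.neg (neg_ne_zero.mpr hr) (by rwa [abs_neg]) (by
      have e : (u.natAbs : ℤ) - -r = -(u - r) := by omega
      rw [e]; exact (dvd_neg).mpr hd)
    have e : (u.natAbs : ℤ) * -1 = u := by omega
    rw [e] at this
    simpa using this


noncomputable def psiw (p : ℕ) (a : ZMod p) : Wg ⧸ Lw p := fw p (a.val : ℤ)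

section
variable {p : ℕ} [hp : Fact p.Prime]

theorem val_ok {a : ZMod p} (ha : a ≠ 0) : ((a.val : ℤ) ≠ 0) ∧ |(a.val : ℤ)| < p := by
  refine ⟨by exact_mod_cast (ZMod.val_ne_zero a).mpr ha, ?_⟩
  rw [Nat.abs_cast]
  exact_mod_cast a.val_lt

theorem val_smooth {a : ZMod p} (ha : a ≠ 0) : Smooth p (a.val : ℤ) :=
  Smooth.of_lt (val_ok ha).1 (val_ok ha).2

theorem fw_eq_psi {u : ℤ} (hu : Smooth p u) : fw p u = psiw p (u : ZMod p) := by
  have h0 : (u : ZMod p) ≠ 0 := by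
    rw [Ne, ZMod.intCast_zmod_eq_zero_iff_dvd]
    exact hu.not_dvd hp.1
  refine fw_T1 hp.1 hu (val_ok h0).1 (val_ok h0).2 ?_
  rw [← ZMod.intCast_zmod_eq_zero_iff_dvd]
  simp

theorem psi_sq (a x : ZMod p) (ha : a ≠ 0) (hx : x ≠ 0) : psiw p (a * x ^ 2) = psiw p a := by
  have h1 := fw_eq_psi (p := p) ((val_smooth ha).mul ((val_smooth hx).mul (val_smooth hx)))
  have e : (((a.val : ℤ) * ((x.val : ℤ) * x.val) : ℤ) : ZMod p) = a * x ^ 2 := by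
    push_cast; simp only [ZMod.natCast_zmod_val]; ring
  rw [e] at h1
  rw [← h1]
  unfold psiw fw
  rw [← wg_sq ((p : ℚ) * ((a.val : ℤ) : ℚ)) (x.val : ℚ) (by exact_mod_cast (val_ok hx).1)]
  congr 2
  push_cast; ring

theorem psi_neg (a : ZMod p) (ha : a ≠ 0) : psiw p (-a) = - psiw p a := by
  have h1 := fw_eq_psi (p := p) (val_smooth ha).neg
  have e : ((-(a.val : ℤ) : ℤ) : ZMod p) = -a := by
    push_cast; simp
  rw [e] at h1
  rw [← h1]
  unfold psiw fw
  rw [← QuotientAddGroup.mk_neg, ← wg_neg]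
  congr 2
  push_cast; ring

theorem psi_add (a b : ZMod p) (ha : a ≠ 0) (hb : b ≠ 0) (hab : a + b ≠ 0) :
    psiw p a + psiw p b = psiw p (a + b) + psiw p (a * b * (a + b)) := by
  have hp0 : (p : ℚ) ≠ 0 := by exact_mod_cast hp.1.ne_zero
  have la := a.val_lt
  have lb := b.val_lt
  have sb : Smooth p ((b.val : ℤ) - p) := Smooth.of_lt (by omega) (by
    have := (val_ok hb).1
    rw [abs_lt]; omega)
  have ea : (((a.val : ℤ) : ℤ) : ZMod p) = a := by simp
  have eb : (((b.val : ℤ) - p : ℤ) : ZMod p) = b := by simp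
  have eab : (((a.val : ℤ) + (b.val - p) : ℤ) : ZMod p) = a + b := by simp
  have hs0 : (a.val : ℤ) + (b.val - p) ≠ 0 := by
    intro h
    rw [h] at eab
    exact hab (by simpa using eab.symm)
  have sab : Smooth p ((a.val : ℤ) + (b.val - p)) := Smooth.of_lt hs0 (by
    have := (val_ok hb).1
    rw [abs_lt]; omega)
  have sp := ((val_smooth ha).mul sb).mul sab
  have ep : (((a.val : ℤ) * (b.val - p) * (a.val + (b.val - p)) : ℤ) : ZMod p) = a * b * (a + b) := by
    simp
  have q1 := fw_eq_psi (val_smooth ha)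
  have q2 := fw_eq_psi sb
  have q3 := fw_eq_psi sab
  have q4 := fw_eq_psi sp
  rw [ea] at q1
  rw [eb] at q2
  rw [eab] at q3
  rw [ep] at q4
  rw [← q1, ← q2, ← q3, ← q4]
  unfold fw
  rw [← QuotientAddGroup.mk_add, ← QuotientAddGroup.mk_add, wg_add]
  · congr 2
    · congr 1; push_cast; ring
    · symm
      rw [← wg_sq _ (p : ℚ) hp0]
      congr 1; push_cast; ring
  · have := (val_ok ha).1; positivity
  · have := sb.1; positivity
  · rw [← mul_add, ← Int.cast_add]; positivity

theorem Lw_list {q : ℕ} {x : Wg} (hx : x ∈ Lw q) :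
    ∃ l : List ℤ, (∀ u ∈ l, Smooth q u) ∧ x = (l.map fun u : ℤ => wg (u : ℚ)).sum := by
  unfold Lw at hx
  induction hx using AddSubgroup.closure_induction with
  | mem x hx => obtain ⟨u, hu, rfl⟩ := hx; exact ⟨[u], by simpa using hu, by simp⟩
  | zero => exact ⟨[], by simp, by simp⟩
  | add x y _ _ hx hy =>
    obtain ⟨l, h1, h2⟩ := hx
    obtain ⟨m, h3, h4⟩ := hy
    refine ⟨l ++ m, ?_, by simp [h2, h4]⟩
    intro u hu
    rcases List.mem_append.mp hu with h | h
    · exact h1 u h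
    · exact h3 u h
  | neg x _ hx =>
    obtain ⟨l, h1, h2⟩ := hx
    refine ⟨l.map (fun u => -u), ?_, ?_⟩
    · simp only [List.mem_map]
      rintro _ ⟨u, hu, rfl⟩
      exact (h1 u hu).neg
    · rw [h2, List.sum_neg]
      simp [wg_neg, Function.comp_def]

theorem gen_psi {u : ℤ} (hu : Smooth (p + 1) u) :
    ∃ l : List (ZMod p), (∀ a ∈ l, a ≠ 0) ∧
      (QuotientAddGroup.mk (wg u) : Wg ⧸ Lw p) = (l.map (psiw p)).sum := by
  have hpp := hp.1
  have hp0 : (p : ℚ) ≠ 0 := by exact_mod_cast hp.1.ne_zero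
  have hfin : FiniteMultiplicity (p : ℤ) u :=
    Int.finiteMultiplicity_iff.mpr ⟨by simpa using hpp.ne_one, hu.1⟩
  obtain ⟨w, hw, hnd⟩ := hfin.exists_eq_pow_mul_and_not_dvd
  have sw : Smooth p w := by
    have h1 : Smooth (p + 1) w := by rw [hw] at hu; exact hu.of_mul
    refine ⟨h1.1, fun q hq hd => ?_⟩
    have := h1.2 q hq hd
    rcases Nat.lt_succ_iff_lt_or_eq.mp this with h | h
    · exact h
    · subst h; exact absurd hd hnd
  rcases Nat.even_or_odd' (multiplicity (p : ℤ) u) with ⟨i, hi | hi⟩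
  · refine ⟨[], by simp, ?_⟩
    rw [List.map_nil, List.sum_nil, QuotientAddGroup.eq_zero_iff]
    have : (u : ℚ) = w * (p ^ i) ^ 2 := by rw [hw, hi]; push_cast; ring
    rw [this, wg_sq _ _ (pow_ne_zero _ hp0)]
    exact mem_Lw sw
  · have : (u : ℚ) = (p * w) * (p ^ i) ^ 2 := by rw [hw, hi]; push_cast; ring
    rw [this, wg_sq _ _ (pow_ne_zero _ hp0)]
    refine ⟨[(w : ZMod p)], ?_, ?_⟩
    · simp only [List.mem_singleton, forall_eq]
      rw [Ne, ZMod.intCast_zmod_eq_zero_iff_dvd]; exact hnd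
    · simp only [List.map_cons, List.map_nil, List.sum_singleton]
      exact fw_eq_psi sw

theorem Lw_psi {x : Wg} (hx : x ∈ Lw (p + 1)) :
    ∃ l : List (ZMod p), (∀ a ∈ l, a ≠ 0) ∧
      (QuotientAddGroup.mk x : Wg ⧸ Lw p) = (l.map (psiw p)).sum := by
  obtain ⟨l, h1, rfl⟩ := Lw_list hx
  induction l with
  | nil => exact ⟨[], by simp, by simp⟩
  | cons u l ih =>
    have h1' : ∀ v ∈ l, Smooth (p + 1) v := fun v hv => h1 v (by simp [hv])
    obtain ⟨m, h2, h3⟩ := ih h1' (AddSubgroup.list_sum_mem _ (by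
      simp only [List.mem_map]
      rintro _ ⟨v, hv, rfl⟩
      exact mem_Lw (h1' v hv)))
    obtain ⟨m', h4, h5⟩ := gen_psi (p := p) (h1 u (by simp))
    refine ⟨m' ++ m, ?_, ?_⟩
    · intro a ha
      rcases List.mem_append.mp ha with h | h
      · exact h4 a h
      · exact h2 a h
    · rw [List.map_cons, List.sum_cons, QuotientAddGroup.mk_add, h3, h5]
      simp

theorem step_repr {x : Wg} (hx : x ∈ Lw (p + 1)) :
    ∃ (j k : ℕ) (u : Fin j → ℤ) (r : Fin k → ℤ), (∀ i, Smooth p (u i)) ∧ (∀ i, r i ≠ 0) ∧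
      (Aniso fun i => (r i : ZMod p)) ∧ x = ∑ i, wg (u i) + ∑ i, wg ((p : ℚ) * r i) := by
  obtain ⟨l, h1, h2⟩ := Lw_psi hx
  obtain ⟨k, c, h3, h4, h5⟩ := red_aniso (psiw p) psi_sq psi_neg psi_add _ l rfl h1
  have h6 : x - ∑ i, wg ((p : ℚ) * ((c i).val : ℤ)) ∈ Lw p := by
    rw [← QuotientAddGroup.eq_zero_iff, QuotientAddGroup.mk_sub, h2, ← h5, sub_eq_zero]
    exact (map_sum (QuotientAddGroup.mk' (Lw p)) _ _).symm
  obtain ⟨m, h7, h8⟩ := Lw_list h6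
  refine ⟨m.length, k, m.get, fun i => ((c i).val : ℤ), fun i => h7 _ (m.get_mem i),
    fun i => (val_ok (h3 i)).1, by simpa using h4, ?_⟩
  rw [sub_eq_iff_eq_add] at h8
  rw [h8]
  congr 1
  simpa using (Fin.sum_univ_fun_getElem m (fun u : ℤ => wg (u : ℚ))).symm
end


def icast (ι : Type) : (ι → ℤ) →ₗ[ℤ] (ι → ℚ) where
  toFun x i := (x i : ℚ)
  map_add' x y := by ext; simp
  map_smul' x y := by ext; simp

open Module in
theorem sat_basis {ι : Type} [Fintype ι] (I : Submodule ℚ (ι → ℚ)) :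
    ∃ (d e : ℕ) (b : Basis (Fin d ⊕ Fin e) ℤ (ι → ℤ)), d = finrank ℚ I ∧
      ∀ i, icast ι (b (Sum.inl i)) ∈ I := by
  let Λ : Submodule ℤ (ι → ℤ) := (I.restrictScalars ℤ).comap (icast ι)
  have hΛ : ∀ x, x ∈ Λ ↔ icast ι x ∈ I := fun x => Iff.rfl
  have : IsTorsionFree ℤ ((ι → ℤ) ⧸ Λ) := by
    refine .of_smul_eq_zero ?_
    intro n x hx
    induction x using Submodule.Quotient.induction_on with
    | _ x =>
    by_cases hn : n = 0
    · exact Or.inl hn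
    right
    rw [← Submodule.Quotient.mk_smul, Submodule.Quotient.mk_eq_zero, hΛ] at hx
    rw [Submodule.Quotient.mk_eq_zero, hΛ]
    rw [map_smul] at hx
    have h2 := I.smul_mem (n : ℚ)⁻¹ hx
    convert h2 using 1
    ext i
    have : (n : ℚ) ≠ 0 := by exact_mod_cast hn
    simp [this]
  have : Module.Free ℤ ((ι → ℤ) ⧸ Λ) := inferInstance
  let b1 := Module.finBasis ℤ Λ
  let b2 := Module.finBasis ℤ ((ι → ℤ) ⧸ Λ)
  refine ⟨_, _, b1.sumQuot b2, ?_, ?_⟩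
  · let v : Fin (finrank ℤ Λ) → (ι → ℚ) := fun i => icast ι (b1 i)
    have hinj : Function.Injective (icast ι) := by
      intro x y h
      ext i
      have := congrFun h i
      simpa [icast] using this
    have li : LinearIndependent ℚ v := by
      rw [← LinearIndependent.iff_fractionRing ℤ ℚ]
      have h1 := b1.linearIndependent
      have h2 := h1.map' Λ.subtype (by simp)
      exact h2.map' (icast ι) (LinearMap.ker_eq_bot.mpr hinj)
    have hs : Submodule.span ℚ (Set.range v) = I := by
      apply le_antisymm
      · rw [Submodule.span_le]
        rintro _ ⟨i, rfl⟩
        exact (b1 i).2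
      · intro x hx
        obtain ⟨N, hN⟩ := IsLocalization.exist_integer_multiples_of_finite (nonZeroDivisors ℤ) x
        choose y hy using hN
        have hN0 : (N : ℤ) ≠ 0 := nonZeroDivisors.coe_ne_zero N
        have hxy : icast ι y = ((N : ℤ) : ℚ) • x := by
          ext i
          have := hy i
          simpa [icast] using this
        have hyΛ : y ∈ Λ := by
          rw [hΛ, hxy]; exact I.smul_mem _ hx
        have hxx : x = (((N : ℤ) : ℚ)⁻¹) • icast ι y := by
          rw [hxy, smul_smul, inv_mul_cancel₀ (by exact_mod_cast hN0), one_smul]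
        rw [hxx]
        apply Submodule.smul_mem
        have h3 := b1.sum_repr ⟨y, hyΛ⟩
        have h4 : icast ι y = ∑ i, ((b1.repr ⟨y, hyΛ⟩ i : ℤ) : ℚ) • v i := by
          have := congrArg (fun z : Λ => icast ι z) h3
          simp only at this
          rw [← this]
          simp only [Submodule.coe_sum, Submodule.coe_smul, map_sum, map_smul, v]
          refine Finset.sum_congr rfl fun i _ => ?_
          ext; simp
        rw [h4]
        exact Submodule.sum_mem _ fun i _ => Submodule.smul_mem _ _ (Submodule.subset_span ⟨i, rfl⟩)
    rw [← hs, finrank_span_eq_card li, Fintype.card_fin]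
  · intro i
    rw [Basis.sumQuot_inl]
    exact (b1 i).2

theorem lem_C {p : ℕ} [hp : Fact p.Prime] {μ : Type} [Fintype μ] [DecidableEq μ] {k : ℕ}
    (M : Matrix μ μ ℤ) (hsym : M.transpose = M) (hdet : ((M.det : ℤ) : ZMod p) ≠ 0)
    (r : Fin k → ℤ) (hr : Aniso fun i => (r i : ZMod p))
    (I : Submodule ℚ (μ ⊕ Fin k → ℚ))
    (hI : ∀ X : μ ⊕ Fin k → ℤ, icast _ X ∈ I →
      dotProduct (X ∘ Sum.inl) (M.mulVec (X ∘ Sum.inl)) = p * ∑ i, r i * X (Sum.inr i) ^ 2)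
    (hd : Fintype.card μ + k ≤ 2 * Module.finrank ℚ I) : k = 0 := by
  have hp0 : (p : ℤ) ≠ 0 := by exact_mod_cast hp.1.ne_zero
  obtain ⟨d, e, b, hde, hb⟩ := sat_basis I
  have hB : ∀ X Y : μ ⊕ Fin k → ℤ, icast _ X ∈ I → icast _ Y ∈ I →
      dotProduct (X ∘ Sum.inl) (M.mulVec (Y ∘ Sum.inl)) =
        p * ∑ i, r i * X (Sum.inr i) * Y (Sum.inr i) := by
    intro X Y hX hY
    have h1 := hI X hX
    have h2 := hI Y hY
    have h3 := hI (X + Y) (by rw [map_add]; exact I.add_mem hX hY)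
    have e1 : (X + Y) ∘ Sum.inl = X ∘ Sum.inl + Y ∘ (Sum.inl : μ → μ ⊕ Fin k) := rfl
    have e2 : dotProduct (Y ∘ Sum.inl) (M.mulVec (X ∘ Sum.inl)) =
        dotProduct (X ∘ Sum.inl) (M.mulVec (Y ∘ Sum.inl)) := by
      rw [Matrix.dotProduct_mulVec, ← Matrix.mulVec_transpose, hsym, dotProduct_comm]
    have e3 : ∑ i, r i * (X + Y) (Sum.inr i) ^ 2 = ∑ i, r i * X (Sum.inr i) ^ 2 +
        ∑ i, r i * Y (Sum.inr i) ^ 2 + 2 * ∑ i, r i * X (Sum.inr i) * Y (Sum.inr i) := by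
      rw [Finset.mul_sum, ← Finset.sum_add_distrib, ← Finset.sum_add_distrib]
      refine Finset.sum_congr rfl fun i _ => ?_
      simp; ring
    rw [e1, Matrix.mulVec_add, dotProduct_add, add_dotProduct, add_dotProduct, h1, h2, e2, e3] at h3
    linarith
  let v : Fin d → μ → ZMod p := fun i m => (b (Sum.inl i) (Sum.inl m) : ZMod p)
  have li : LinearIndependent (ZMod p) v := by
    rw [Fintype.linearIndependent_iff]
    intro g hg
    obtain ⟨G, hG⟩ : ∃ G : Fin d → ℤ, ∀ i, (G i : ZMod p) = g i :=
      ⟨fun i => ((g i).val : ℤ), fun i => by simp⟩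
    let X : μ ⊕ Fin k → ℤ := ∑ i, G i • b (Sum.inl i)
    have hX : icast _ X ∈ I := by
      simp only [X, map_sum, map_smul]
      refine Submodule.sum_mem _ fun i _ => ?_
      exact (I.restrictScalars ℤ).smul_mem _ (hb i)
    have hXl : ∀ m, (p : ℤ) ∣ X (Sum.inl m) := by
      intro m
      rw [← ZMod.intCast_zmod_eq_zero_iff_dvd]
      have := congrFun hg m
      simpa [-zsmul_eq_mul, X, hG, v, Finset.sum_apply] using this
    choose Y hY using hXl
    have hXY : X ∘ Sum.inl = (p : ℤ) • Y := by
      ext m; simp [hY]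
    have h1 := hI X hX
    rw [hXY, Matrix.mulVec_smul, dotProduct_smul, smul_dotProduct, smul_eq_mul, smul_eq_mul] at h1
    have h2 := mul_left_cancel₀ hp0 h1
    have h3 : ∑ i, (r i : ZMod p) * (X (Sum.inr i) : ZMod p) ^ 2 = 0 := by
      have := congrArg (Int.cast : ℤ → ZMod p) h2
      push_cast at this
      rw [← this]; simp
    have h4 := hr _ h3
    have hXr : ∀ s, (p : ℤ) ∣ X s := by
      rintro (m | i)
      · exact ⟨_, hY m⟩
      · rw [← ZMod.intCast_zmod_eq_zero_iff_dvd]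
        exact congrFun h4 i
    choose Z hZ using hXr
    have hXZ : X = (p : ℤ) • Z := by ext s; simp [hZ]
    intro i
    have h5 : b.repr X (Sum.inl i) = G i := by
      simp [-zsmul_eq_mul, X, map_sum, Finsupp.single_apply]
    rw [hXZ] at h5
    simp only [map_smul, Finsupp.smul_apply, smul_eq_mul] at h5
    have := congrArg (Int.cast : ℤ → ZMod p) h5
    simpa [hG] using this.symm
  let Mp : Matrix μ μ (ZMod p) := M.map (Int.castRingHom (ZMod p))
  have hMp : Mp.det ≠ 0 := by
    have : Mp.det = ((M.det : ℤ) : ZMod p) := ((Int.castRingHom (ZMod p)).map_det M).symm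
    rwa [this]
  have h1 := orth_le (Matrix.toLinearMap₂' (ZMod p) Mp) (by
      rw [injective_iff_map_eq_zero]
      intro x hx
      refine Matrix.eq_zero_of_vecMul_eq_zero hMp ?_
      ext y
      have := congrArg (fun f => f (Pi.single y 1)) hx
      simp [Matrix.toLinearMap₂'_apply'] at this
      exact this)
    (Submodule.span _ (Set.range v)) (Submodule.span _ (Set.range v)) (by
      intro x hx y hy
      induction hx, hy using Submodule.span_induction₂ with
      | mem_mem x y hx hy =>
        obtain ⟨i, rfl⟩ := hx
        obtain ⟨j, rfl⟩ := hy
        have := congrArg (Int.castRingHom (ZMod p)) (hB _ _ (hb i) (hb j))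
        rw [map_mul] at this
        simp only [eq_intCast, Int.cast_natCast, CharP.cast_eq_zero, zero_mul] at this
        rw [← this, Matrix.toLinearMap₂'_apply']
        simp [dotProduct, Matrix.mulVec, v, Mp]
      | zero_left => simp
      | zero_right => simp
      | add_left _ _ _ _ _ _ h h' => simp [h, h']
      | add_right _ _ _ _ _ _ h h' => simp [h, h']
      | smul_left _ _ _ _ _ h => simp [h]
      | smul_right _ _ _ _ _ h => simp [h])
  rw [finrank_span_eq_card li, Fintype.card_fin, Module.finrank_fintype_fun_eq_card] at h1
  omega


theorem diagQ {n : ℕ} (A : Matrix (Fin n) (Fin n) ℤ) (hsym : A.transpose = A) (hdet : A.det ≠ 0) :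
    ∃ a : Fin n → ℚ, (∀ i, a i ≠ 0) ∧ ∃ S : (Fin n → ℚ) ≃ₗ[ℚ] (Fin n → ℚ),
      ∀ x, wq a (S x) = dotProduct x ((A.map (Int.cast : ℤ → ℚ)).mulVec x) := by
  let AQ : Matrix (Fin n) (Fin n) ℚ := A.map (Int.cast : ℤ → ℚ)
  have hdQ : AQ.det ≠ 0 := by
    have : AQ.det = ((A.det : ℤ) : ℚ) := ((Int.castRingHom ℚ).map_det A).symm
    rw [this]; exact_mod_cast hdet
  have hsQ : AQ.transpose = AQ := by
    simp only [AQ]; rw [← Matrix.transpose_map, hsym]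
  let B : LinearMap.BilinForm ℚ (Fin n → ℚ) := Matrix.toLinearMap₂' ℚ AQ
  let Q : QuadraticForm ℚ (Fin n → ℚ) := B.toQuadraticMap
  have hBs : B.IsSymm := by
    constructor
    intro x y
    simp only [B, Matrix.toLinearMap₂'_apply', RingHom.id_apply]
    rw [Matrix.dotProduct_mulVec, ← Matrix.mulVec_transpose, hsQ, dotProduct_comm]
  have hQ : (QuadraticMap.associated (R := ℚ) Q).SeparatingLeft := by
    have : QuadraticMap.associated (R := ℚ) Q = B :=
      QuadraticMap.associated_left_inverse ℚ hBs.eq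
    rw [this]
    intro x hx
    refine Matrix.eq_zero_of_vecMul_eq_zero hdQ ?_
    ext y
    have := hx (Pi.single y 1)
    simp [B, Matrix.toLinearMap₂'_apply'] at this
    exact this
  obtain ⟨w, ⟨e⟩⟩ := QuadraticForm.equivalent_weightedSumSquares_units_of_nondegenerate' Q hQ
  have hn : Module.finrank ℚ (Fin n → ℚ) = n := by simp
  refine ⟨fun i => w (Fin.cast hn.symm i), fun i => (w _).ne_zero,
    e.toLinearEquiv ≪≫ₗ LinearEquiv.funCongrLeft ℚ ℚ (finCongr hn.symm), ?_⟩
  intro x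
  have h1 := e.map_app x
  have h2 : Q x = dotProduct x (AQ.mulVec x) := by
    simp [Q, B, Matrix.toLinearMap₂'_apply']
  rw [← h2, ← h1, QuadraticMap.weightedSumSquares_apply, wq, ← (finCongr hn.symm).sum_comp]
  refine Finset.sum_congr rfl fun i _ => ?_
  simp [LinearEquiv.funCongrLeft, LinearMap.funLeft, Units.smul_def]
  ring_nf

theorem descent_prime {n : ℕ} (A : Matrix (Fin n) (Fin n) ℤ) (hsym : A.transpose = A)
    (hdet : A.det = 1 ∨ A.det = -1) (a : Fin n → ℚ) (ha : ∀ i, a i ≠ 0)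
    (S : (Fin n → ℚ) ≃ₗ[ℚ] (Fin n → ℚ))
    (hS : ∀ x, wq a (S x) = dotProduct x ((A.map (Int.cast : ℤ → ℚ)).mulVec x))
    (p : ℕ) [hp : Fact p.Prime] (h : ∑ i, wg (a i) ∈ Lw (p + 1)) : ∑ i, wg (a i) ∈ Lw p := by
  have hp0 : (p : ℚ) ≠ 0 := by exact_mod_cast hp.1.ne_zero
  obtain ⟨j, k, u, r, hu, hr, han, hx⟩ := step_repr h
  suffices hk : k = 0 by
    subst hk
    rw [hx]
    simp only [Finset.univ_eq_empty, Finset.sum_empty, add_zero]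
    exact sum_mem fun i _ => mem_Lw (hu i)
  have hx' : ∑ i, wg (a i) = ∑ i, wg (Sum.elim (fun i => (u i : ℚ)) (fun i => (p : ℚ) * r i) i) := by
    rw [hx, Fintype.sum_sum_type]; rfl
  rw [wg_eq_iff _ _ ha (by
    rintro (i | i)
    · simpa using (hu i).1
    · simpa [hp.1.ne_zero] using hr i)] at hx'
  obtain ⟨I, hI1, hI2⟩ := hx'
  let Ψ : ((Fin n ⊕ Fin j) ⊕ Fin k → ℚ) ≃ₗ[ℚ] (Fin n → ℚ) × (Fin j ⊕ Fin k → ℚ) :=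
    LinearEquiv.funCongrLeft ℚ ℚ (Equiv.sumAssoc (Fin n) (Fin j) (Fin k)).symm ≪≫ₗ
      LinearEquiv.sumArrowLequivProdArrow _ _ ℚ ℚ ≪≫ₗ
      S.prodCongr (LinearEquiv.refl ℚ _)
  have hΨ1 : ∀ X, (Ψ X).1 = S (fun i => X (Sum.inl (Sum.inl i))) := fun X => rfl
  have hΨ2 : ∀ X i, (Ψ X).2 (Sum.inl i) = X (Sum.inl (Sum.inr i)) := fun X i => rfl
  have hΨ3 : ∀ X i, (Ψ X).2 (Sum.inr i) = X (Sum.inr i) := fun X i => rfl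
  refine lem_C (p := p) (Matrix.fromBlocks A 0 0 (-Matrix.diagonal u)) ?_ ?_ r han
    (I.comap Ψ.toLinearMap) ?_ ?_
  · rw [Matrix.fromBlocks_transpose]
    simp [hsym]
  · rw [Matrix.det_fromBlocks_zero₁₂, Matrix.diagonal_neg, Matrix.det_diagonal]
    rw [Int.cast_mul, Int.cast_prod]
    refine mul_ne_zero ?_ (Finset.prod_ne_zero_iff.mpr fun i _ => ?_)
    · rcases hdet with h | h <;> simp [h]
    · simp only [Int.cast_neg, neg_ne_zero, Ne]
      rw [ZMod.intCast_zmod_eq_zero_iff_dvd]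
      exact (hu i).not_dvd hp.1
  · intro X hX
    have h1 := hI1 _ hX
    simp only [LinearEquiv.coe_coe] at h1
    rw [hΨ1, hS] at h1
    have h2 : dotProduct (fun i => (icast _ X : _ → ℚ) (Sum.inl (Sum.inl i)))
       ((A.map (Int.cast : ℤ → ℚ)).mulVec (fun i => (icast _ X : _ → ℚ) (Sum.inl (Sum.inl i)))) =
       ((dotProduct (fun i => X (Sum.inl (Sum.inl i)))
        (A.mulVec fun i => X (Sum.inl (Sum.inl i))) : ℤ) : ℚ) := by
      simp [dotProduct, Matrix.mulVec, icast]
    rw [h2] at h1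
    have h3 : wq (Sum.elim (fun i => (u i : ℚ)) (fun i => (p : ℚ) * r i)) (Ψ (icast _ X)).2 =
        ((∑ i, u i * X (Sum.inl (Sum.inr i)) ^ 2 + p * ∑ i, r i * X (Sum.inr i) ^ 2 : ℤ) : ℚ) := by
      rw [wq, Fintype.sum_sum_type]
      simp only [hΨ2, hΨ3]
      simp [icast, Finset.mul_sum, mul_assoc]
    rw [h3] at h1
    have h4 := Int.cast_injective h1
    have h5 : dotProduct (X ∘ Sum.inl) ((Matrix.fromBlocks A 0 0 (-Matrix.diagonal u)).mulVec (X ∘ Sum.inl))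
        = dotProduct (fun i => X (Sum.inl (Sum.inl i)))
        (A.mulVec fun i => X (Sum.inl (Sum.inl i))) - ∑ i, u i * X (Sum.inl (Sum.inr i)) ^ 2 := by
      rw [Matrix.fromBlocks_mulVec]
      simp only [dotProduct, Fintype.sum_sum_type, Function.comp, Sum.elim_inl, Sum.elim_inr]
      simp only [Matrix.zero_mulVec, add_zero, zero_add, Matrix.neg_mulVec, Matrix.mulVec_diagonal, Pi.neg_apply]
      rw [sub_eq_add_neg, ← Finset.sum_neg_distrib]
      congr 1
      refine Finset.sum_congr rfl fun i _ => ?_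
      simp; ring
    rw [h5, h4]; ring
  · have : I.comap Ψ.toLinearMap = I.map Ψ.symm.toLinearMap := by
      rw [Submodule.map_equiv_eq_comap_symm]; rfl
    rw [this, LinearEquiv.finrank_map_eq]
    simp at hI2 ⊢
    omega

theorem Lw_mono {p q : ℕ} (h : p ≤ q) : Lw p ≤ Lw q := by
  refine AddSubgroup.closure_mono ?_
  rintro _ ⟨u, hu, rfl⟩
  exact ⟨u, ⟨hu.1, fun r hr hd => (hu.2 r hr hd).trans_le h⟩, rfl⟩

theorem Lw_exists (a : ℚ) : ∃ N, wg a ∈ Lw N := by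
  by_cases ha : a = 0
  · refine ⟨0, ?_⟩
    have : wg a = 0 := by simp [wg, ha]
    rw [this]; exact zero_mem _
  have hd : (a.den : ℚ) ≠ 0 := by exact_mod_cast a.den_nz
  have h1 : wg a = wg ((a.num * a.den : ℤ) : ℚ) := by
    rw [← wg_sq a a.den hd]
    congr 1
    have := Rat.mul_den_eq_num a
    push_cast
    rw [← this]; ring
  rw [h1]
  set u : ℤ := a.num * a.den
  have hu : u ≠ 0 := mul_ne_zero (Rat.num_ne_zero.mpr ha) (by exact_mod_cast a.den_nz)
  exact ⟨u.natAbs + 1, mem_Lw (Smooth.of_lt hu (by push_cast; omega))⟩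

theorem Lw_fin {n : ℕ} (a : Fin n → ℚ) : ∃ N, ∑ i, wg (a i) ∈ Lw N := by
  choose N hN using fun i => Lw_exists (a i)
  exact ⟨Finset.univ.sup N, sum_mem fun i _ => Lw_mono (Finset.le_sup (Finset.mem_univ i)) (hN i)⟩

theorem descent {n : ℕ} (A : Matrix (Fin n) (Fin n) ℤ) (hsym : A.transpose = A)
    (hdet : A.det = 1 ∨ A.det = -1) (a : Fin n → ℚ) (ha : ∀ i, a i ≠ 0)
    (S : (Fin n → ℚ) ≃ₗ[ℚ] (Fin n → ℚ))
    (hS : ∀ x, wq a (S x) = dotProduct x ((A.map (Int.cast : ℤ → ℚ)).mulVec x)) :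
    ∑ i, wg (a i) ∈ Lw 0 := by
  obtain ⟨N, hN⟩ := Lw_fin a
  induction N with
  | zero => exact hN
  | succ N ih =>
    apply ih
    by_cases hp : N.Prime
    · have : Fact N.Prime := ⟨hp⟩
      exact descent_prime A hsym hdet a ha S hS N hN
    · refine AddSubgroup.closure_mono ?_ hN
      rintro _ ⟨u, hu, rfl⟩
      refine ⟨u, ⟨hu.1, fun q hq hd => ?_⟩, rfl⟩
      have h1 := hu.2 q hq hd
      have h2 : q ≠ N := by rintro rfl; exact hp hq
      omega

theorem Smooth_zero {u : ℤ} (h : Smooth 0 u) : u = 1 ∨ u = -1 := by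
  refine Int.natAbs_eq_natAbs_iff.mp ?_
  by_contra hne
  obtain ⟨q, hq, hd⟩ := Nat.exists_prime_and_dvd hne
  exact absurd (h.2 q hq (Int.natCast_dvd.mpr hd)) (by omega)


theorem inert {K V ι κ : Type} [Field K] [LinearOrder K] [IsStrictOrderedRing K] [AddCommGroup V]
    [Module K V] [FiniteDimensional K V] [Fintype ι] [Fintype κ] (a : ι → K) (b : κ → K)
    (ha : ∀ i, a i ≠ 0) (hb : ∀ i, b i ≠ 0) (f : V →ₗ[K] (ι → K)) (g : V →ₗ[K] (κ → K))
    (hfg : ∀ v, f v = 0 → g v = 0 → v = 0)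
    (h : ∀ v, ∑ i, a i * f v i ^ 2 = ∑ i, b i * g v i ^ 2) :
    Module.finrank K V ≤ (Finset.univ.filter fun i => 0 < a i).card +
      (Finset.univ.filter fun i => b i < 0).card := by
  let F : V →ₗ[K] (({i // 0 < a i} ⊕ {i // b i < 0}) → K) :=
    LinearMap.pi (Sum.elim (fun i => LinearMap.proj i.1 ∘ₗ f) (fun i => LinearMap.proj i.1 ∘ₗ g))
  have hF : Function.Injective F := by
    rw [injective_iff_map_eq_zero]
    intro v hv
    have h1 : ∀ i, 0 < a i → f v i = 0 := fun i hi => congrFun hv (Sum.inl ⟨i, hi⟩)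
    have h2 : ∀ i, b i < 0 → g v i = 0 := fun i hi => congrFun hv (Sum.inr ⟨i, hi⟩)
    have t1 : ∀ i ∈ Finset.univ, a i * f v i ^ 2 ≤ 0 := by
      intro i _
      by_cases hi : 0 < a i
      · simp [h1 i hi]
      · exact mul_nonpos_of_nonpos_of_nonneg (not_lt.mp hi) (sq_nonneg _)
    have t2 : ∀ i ∈ Finset.univ, 0 ≤ b i * g v i ^ 2 := by
      intro i _
      by_cases hi : b i < 0
      · simp [h2 i hi]
      · exact mul_nonneg (not_lt.mp hi) (sq_nonneg _)
    have s1 := Finset.sum_nonpos t1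
    have s2 := Finset.sum_nonneg t2
    have e := h v
    have z1 : ∑ i, a i * f v i ^ 2 = 0 := le_antisymm s1 (e ▸ s2)
    have z2 : ∑ i, b i * g v i ^ 2 = 0 := e ▸ z1
    rw [Finset.sum_eq_zero_iff_of_nonpos t1] at z1
    rw [Finset.sum_eq_zero_iff_of_nonneg t2] at z2
    refine hfg v ?_ ?_
    · ext i
      simpa [ha i] using z1 i (Finset.mem_univ i)
    · ext i
      simpa [hb i] using z2 i (Finset.mem_univ i)
  have := LinearMap.finrank_le_finrank_of_injective hF
  rw [Module.finrank_fintype_fun_eq_card, Fintype.card_sum, Fintype.card_subtype,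
    Fintype.card_subtype] at this
  exact this

theorem inert' {K V ι κ : Type} [Field K] [LinearOrder K] [IsStrictOrderedRing K] [AddCommGroup V]
    [Module K V] [FiniteDimensional K V] [Fintype ι] [Fintype κ] (a : ι → K) (b : κ → K)
    (ha : ∀ i, a i ≠ 0) (hb : ∀ i, b i ≠ 0) (f : V →ₗ[K] (ι → K)) (g : V →ₗ[K] (κ → K))
    (hfg : ∀ v, f v = 0 → g v = 0 → v = 0)
    (h : ∀ v, ∑ i, a i * f v i ^ 2 = ∑ i, b i * g v i ^ 2) :
    Module.finrank K V ≤ (Finset.univ.filter fun i => a i < 0).card +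
      (Finset.univ.filter fun i => 0 < b i).card := by
  have := inert (fun i => - a i) (fun i => - b i) (by simpa using ha) (by simpa using hb) f g hfg
    (by simpa using h)
  simpa using this

theorem card_pn {K ι : Type} [Field K] [LinearOrder K] [Fintype ι] (a : ι → K)
    (ha : ∀ i, a i ≠ 0) : (Finset.univ.filter fun i => 0 < a i).card +
      (Finset.univ.filter fun i => a i < 0).card = Fintype.card ι := by
  classical
  rw [← Finset.card_union_of_disjoint, ← Finset.card_univ]
  · congr 1
    ext i
    simpa using (ha i).symm.lt_or_gt
  · rw [Finset.disjoint_filter]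
    intro i _ h1 h2
    exact lt_asymm h1 h2

theorem WE.sig {ι κ : Type} [Fintype ι] [Fintype κ] {a : ι → ℚ} {b : κ → ℚ}
    (ha : ∀ i, a i ≠ 0) (hb : ∀ i, b i ≠ 0) (h : WE a b) :
    (Finset.univ.filter fun i => 0 < a i).card + (Finset.univ.filter fun i => b i < 0).card =
    (Finset.univ.filter fun i => a i < 0).card + (Finset.univ.filter fun i => 0 < b i).card := by
  obtain ⟨I, h1, h2⟩ := h
  have key := inert a b ha hb ((LinearMap.fst ℚ (ι → ℚ) (κ → ℚ)) ∘ₗ I.subtype)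
    ((LinearMap.snd ℚ (ι → ℚ) (κ → ℚ)) ∘ₗ I.subtype)
    (fun v h1 h2 => Subtype.ext (Prod.ext h1 h2)) (fun v => h1 v v.2)
  have key' := inert' a b ha hb ((LinearMap.fst ℚ (ι → ℚ) (κ → ℚ)) ∘ₗ I.subtype)
    ((LinearMap.snd ℚ (ι → ℚ) (κ → ℚ)) ∘ₗ I.subtype)
    (fun v h1 h2 => Subtype.ext (Prod.ext h1 h2)) (fun v => h1 v v.2)
  have c1 := card_pn a ha
  have c2 := card_pn b hb
  omega

theorem sig_real {n : ℕ} (A : Matrix (Fin n) (Fin n) ℤ) (hdet : A.det ≠ 0)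
    (hherm : (A.map ((↑) : ℤ → ℝ)).IsHermitian)
    (hsig : (Finset.univ.filter fun i => 0 < hherm.eigenvalues i).card =
            (Finset.univ.filter fun i => hherm.eigenvalues i < 0).card)
    (a : Fin n → ℚ) (ha : ∀ i, a i ≠ 0)
    (S : (Fin n → ℚ) ≃ₗ[ℚ] (Fin n → ℚ))
    (hS : ∀ x, wq a (S x) = dotProduct x ((A.map (Int.cast : ℤ → ℚ)).mulVec x))
    (hsym : A.transpose = A) :
    (Finset.univ.filter fun i => 0 < a i).card = (Finset.univ.filter fun i => a i < 0).card := by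
  let R : Matrix (Fin n) (Fin n) ℚ := LinearMap.toMatrix' S.symm.toLinearMap
  let AQ : Matrix (Fin n) (Fin n) ℚ := A.map (Int.cast : ℤ → ℚ)
  have hR : ∀ x, R.mulVec x = S.symm x := fun x => by simp [R, LinearMap.toMatrix'_mulVec]
  have hq : ∀ x, wq a x = dotProduct (R.mulVec x) (AQ.mulVec (R.mulVec x)) := by
    intro x
    rw [hR, ← hS, LinearEquiv.apply_symm_apply]
  have hsQ : AQ.transpose = AQ := by
    simp only [AQ]; rw [← Matrix.transpose_map, hsym]
  have hpol : ∀ x y, ∑ i, a i * x i * y i = dotProduct (R.mulVec x) (AQ.mulVec (R.mulVec y)) := by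
    intro x y
    have h1 := hq (x + y)
    have e2 : dotProduct (R.mulVec y) (AQ.mulVec (R.mulVec x)) =
        dotProduct (R.mulVec x) (AQ.mulVec (R.mulVec y)) := by
      rw [Matrix.dotProduct_mulVec, ← Matrix.mulVec_transpose, hsQ, dotProduct_comm]
    rw [wq_polar, Matrix.mulVec_add, Matrix.mulVec_add, dotProduct_add, add_dotProduct,
      add_dotProduct, hq, hq, e2] at h1
    linarith
  have hM : R.transpose * AQ * R = Matrix.diagonal a := by
    ext i j
    have h1 := hpol (Pi.single i 1) (Pi.single j 1)
    have h2 : dotProduct (R.mulVec (Pi.single i 1)) (AQ.mulVec (R.mulVec (Pi.single j 1))) =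
        (R.transpose * AQ * R) i j := by
      rw [Matrix.mulVec_mulVec, ← Matrix.vecMul_transpose, ← Matrix.dotProduct_mulVec,
        Matrix.mulVec_mulVec, ← mul_assoc]
      simp
    rw [← h2, ← h1]
    simp [Matrix.diagonal_apply, Pi.single_apply]
    grind
  let ρ : Matrix (Fin n) (Fin n) ℝ := R.map (Rat.castHom ℝ)
  have hMr : ρ.transpose * (A.map ((↑) : ℤ → ℝ)) * ρ = Matrix.diagonal (fun i => (a i : ℝ)) := by
    have h1 := congrArg (fun M : Matrix (Fin n) (Fin n) ℚ => M.map (Rat.castHom ℝ)) hM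
    simp only [Matrix.map_mul] at h1
    rw [Matrix.diagonal_map (by simp)] at h1
    convert h1 using 2
    · have e : A.map ((↑) : ℤ → ℝ) = AQ.map (Rat.castHom ℝ) := by ext i j; simp [AQ]
      rw [e]; rfl
    · simp
  let U : Matrix (Fin n) (Fin n) ℝ := hherm.eigenvectorUnitary
  have hsp : A.map ((↑) : ℤ → ℝ) = U * Matrix.diagonal hherm.eigenvalues * U.transpose := by
    have := hherm.spectral_theorem
    rw [Unitary.conjStarAlgAut_apply] at this
    exact this
  have hlam : ∀ i, hherm.eigenvalues i ≠ 0 := by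
    have h1 := hherm.det_eq_prod_eigenvalues
    have h2 : (A.map ((↑) : ℤ → ℝ)).det = ((A.det : ℤ) : ℝ) := ((Int.castRingHom ℝ).map_det A).symm
    have h3 : (A.map ((↑) : ℤ → ℝ)).det ≠ 0 := by rw [h2]; exact_mod_cast hdet
    rw [h1] at h3
    intro i hi
    exact h3 (Finset.prod_eq_zero (Finset.mem_univ i) (by simp [hi]))
  have hid : ∀ x : Fin n → ℝ, ∑ i, (a i : ℝ) * x i ^ 2 =
      ∑ i, hherm.eigenvalues i * ((U.transpose * ρ).mulVec x) i ^ 2 := by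
    intro x
    have h1 : ∀ (d : Fin n → ℝ) (x : Fin n → ℝ), ∑ i, d i * x i ^ 2 = dotProduct x ((Matrix.diagonal d).mulVec x) := by
      intro d x
      simp only [dotProduct, Matrix.mulVec_diagonal]
      exact Finset.sum_congr rfl fun i _ => by ring
    have hMr' := hMr
    rw [hsp] at hMr'
    rw [h1, h1, ← hMr']
    rw [← Matrix.vecMul_transpose (U.transpose * ρ) x, ← Matrix.dotProduct_mulVec,
      Matrix.vecMul_transpose, Matrix.mulVec_mulVec, Matrix.mulVec_mulVec]
    simp [Matrix.mul_assoc]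
  have haR : ∀ i, (a i : ℝ) ≠ 0 := fun i => by exact_mod_cast ha i
  have k1 := inert (fun i => (a i : ℝ)) hherm.eigenvalues haR hlam LinearMap.id
    (Matrix.toLin' (U.transpose * ρ)) (fun v h _ => h) hid
  have k2 := inert' (fun i => (a i : ℝ)) hherm.eigenvalues haR hlam LinearMap.id
    (Matrix.toLin' (U.transpose * ρ)) (fun v h _ => h) hid
  have c1 := card_pn a ha
  have c2 := card_pn _ hlam
  simp only [Rat.cast_pos, Rat.cast_lt_zero] at k1 k2
  simp at k1 k2 c1 c2
  omega

theorem wg_pm_sum {k : ℕ} (c : Fin k → ℤ) (hc : ∀ i, c i = 1 ∨ c i = -1) 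
    (h : (Finset.univ.filter fun i => 0 < c i).card = (Finset.univ.filter fun i => c i < 0).card) :
    ∑ i, wg (c i) = 0 := by
  have h1 : ∀ i, wg (c i) = (if 0 < c i then wg 1 else 0) - (if c i < 0 then wg 1 else 0) := by
    intro i
    rcases hc i with h | h <;> simp [h, wg_neg]
  simp only [h1, Finset.sum_sub_distrib]
  rw [← Finset.sum_filter, ← Finset.sum_filter, Finset.sum_const, Finset.sum_const, h, sub_self]

theorem metab {n : ℕ} (A : Matrix (Fin n) (Fin n) ℤ) (hsym : A.transpose = A)
    (hdet : A.det = 1 ∨ A.det = -1) (hherm : (A.map ((↑) : ℤ → ℝ)).IsHermitian)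
    (hsig : (Finset.univ.filter fun i => 0 < hherm.eigenvalues i).card =
            (Finset.univ.filter fun i => hherm.eigenvalues i < 0).card) :
    ∃ I : Submodule ℚ (Fin n → ℚ), n ≤ 2 * Module.finrank ℚ I ∧
      ∀ x ∈ I, dotProduct x ((A.map (Int.cast : ℤ → ℚ)).mulVec x) = 0 := by
  have hd0 : A.det ≠ 0 := by rcases hdet with h | h <;> rw [h] <;> decide
  obtain ⟨a, ha, S, hS⟩ := diagQ A hsym hd0
  have hs := sig_real A hd0 hherm hsig a ha S hS hsym
  obtain ⟨l, hl, hx⟩ := Lw_list (descent A hsym hdet a ha S hS)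
  have hx2 : ∑ i, wg (a i) = ∑ i : Fin l.length, wg ((l.get i : ℤ) : ℚ) := by
    rw [hx]
    simpa using (Fin.sum_univ_fun_getElem l (fun u : ℤ => wg (u : ℚ))).symm
  have hc : ∀ i, l.get i = 1 ∨ l.get i = -1 := fun i => Smooth_zero (hl _ (l.get_mem i))
  have hc0 : ∀ i, ((l.get i : ℤ) : ℚ) ≠ 0 := by
    intro i
    rcases hc i with h | h <;> rw [h] <;> norm_num
  have hw := ((wg_eq_iff _ _ ha hc0).mp hx2).sig ha hc0
  simp only [Int.cast_pos, Int.cast_lt_zero] at hw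
  have hz := wg_pm_sum l.get hc (by omega)
  rw [hz] at hx2
  have hx3 : ∑ i, wg (a i) = ∑ i : Empty, wg ((fun _ => 1 : Empty → ℚ) i) := by simpa using hx2
  rw [wg_eq_iff _ _ ha (by simp)] at hx3
  obtain ⟨I, hI1, hI2⟩ := hx3
  refine ⟨(I.map (LinearMap.fst ℚ _ _)).map S.symm.toLinearMap, ?_, ?_⟩
  · rw [LinearEquiv.finrank_map_eq]
    have hinj : Function.Injective (LinearMap.fst ℚ (Fin n → ℚ) (Empty → ℚ)) := by
      intro x y h
      exact Prod.ext h (Subsingleton.elim _ _)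
    rw [← (Submodule.equivMapOfInjective _ hinj I).finrank_eq]
    simpa using hI2
  · rintro _ ⟨_, ⟨z, hz, rfl⟩, rfl⟩
    rw [← hS]
    simp only [LinearEquiv.coe_coe, LinearEquiv.apply_symm_apply]
    have := hI1 z hz
    simpa [wq] using this


theorem even_split {n : ℕ} (C : Matrix (Fin n) (Fin n) ℤ) (hsym : C.transpose = C)
    (hev : ∀ i, Even (C i i)) : ∃ X : Matrix (Fin n) (Fin n) ℤ, C = X + X.transpose := by
  refine ⟨Matrix.of fun i j => if i < j then C i j else if i = j then C i i / 2 else 0, ?_⟩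
  ext i j
  have hs : C j i = C i j := congrFun (congrFun hsym i) j
  simp only [Matrix.add_apply, Matrix.transpose_apply, Matrix.of_apply]
  rcases lt_trichotomy i j with h | h | h
  · simp [h, h.not_gt, h.ne']
  · subst h
    obtain ⟨c, hc⟩ := hev i
    simp
    omega
  · simp [h, h.not_gt, h.ne', hs]

theorem even_val {n : ℕ} (A : Matrix (Fin n) (Fin n) ℤ) (hsym : A.transpose = A)
    (hev : ∀ i, Even (A i i)) (x : Fin n → ℤ) : Even (dotProduct x (A.mulVec x)) := by
  obtain ⟨X, rfl⟩ := even_split A hsym hev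
  refine ⟨dotProduct x (X.mulVec x), ?_⟩
  rw [Matrix.add_mulVec, dotProduct_add]
  congr 1
  rw [Matrix.mulVec_transpose, dotProduct_comm, Matrix.dotProduct_mulVec]

theorem final_block {d : ℕ} (M : Matrix (Fin d ⊕ Fin d) (Fin d ⊕ Fin d) ℤ)
    (hsym : M.transpose = M) (hdet : IsUnit M.det) (hev : ∀ i, Even (M i i))
    (h0 : ∀ i j, M (Sum.inl i) (Sum.inl j) = 0) :
    ∃ Q : Matrix (Fin d ⊕ Fin d) (Fin d ⊕ Fin d) ℤ, IsUnit Q.det ∧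
      Q.transpose * M * Q = Matrix.fromBlocks 0 1 1 0 := by
  obtain ⟨B, hB⟩ : ∃ B, B = M.toBlocks₁₂ := ⟨_, rfl⟩
  obtain ⟨C, hC⟩ : ∃ C, C = M.toBlocks₂₂ := ⟨_, rfl⟩
  have hM : M = Matrix.fromBlocks 0 B B.transpose C := by
    rw [← Matrix.fromBlocks_toBlocks M, hB, hC]
    congr 1
    · ext i j; exact h0 i j
    · ext i j
      exact (congrFun (congrFun hsym (Sum.inr i)) (Sum.inl j)).symm
  have hCs : C.transpose = C := by
    rw [hC]; ext i j
    exact congrFun (congrFun hsym (Sum.inr i)) (Sum.inr j)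
  obtain ⟨X, hX⟩ := even_split C hCs (fun i => by rw [hC]; exact hev (Sum.inr i))
  have hBu : IsUnit B.det := by
    have h1 : M * Matrix.fromBlocks 0 1 1 0 = Matrix.fromBlocks B 0 C B.transpose := by
      rw [hM, Matrix.fromBlocks_multiply]; simp
    have h2 : IsUnit (Matrix.fromBlocks 0 1 1 0 : Matrix (Fin d ⊕ Fin d) (Fin d ⊕ Fin d) ℤ).det := by
      have : (Matrix.fromBlocks 0 1 1 0 : Matrix (Fin d ⊕ Fin d) (Fin d ⊕ Fin d) ℤ) *
          Matrix.fromBlocks 0 1 1 0 = 1 := by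
        rw [Matrix.fromBlocks_multiply]; simp
      exact (Matrix.isUnit_iff_isUnit_det _).mp (IsUnit.of_mul_eq_one _ this)
    have h3 := hdet.mul h2
    rw [← Matrix.det_mul, h1, Matrix.det_fromBlocks_zero₁₂] at h3
    exact isUnit_of_mul_isUnit_left h3
  have hBW : B * B⁻¹ = 1 := Matrix.mul_nonsing_inv B hBu
  have hBW' : B⁻¹.transpose * B.transpose = 1 := by
    rw [← Matrix.transpose_mul, hBW, Matrix.transpose_one]
  have hWu : IsUnit (B⁻¹).det := by
    have := Matrix.det_nonsing_inv_mul_det B hBu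
    exact IsUnit.of_mul_eq_one _ this
  generalize B⁻¹ = W at hBW hBW' hWu
  refine ⟨Matrix.fromBlocks 1 (-(W.transpose * X * W)) 0 W, ?_, ?_⟩
  · rw [Matrix.det_fromBlocks_zero₂₁]
    simpa using hWu
  · rw [hM, Matrix.fromBlocks_transpose, Matrix.fromBlocks_multiply, Matrix.fromBlocks_multiply]
    congr 1
    · simp
    · simpa using hBW
    · simpa using hBW'
    · simp only [Matrix.mul_zero, Matrix.transpose_neg, Matrix.transpose_mul, zero_add,
        Matrix.transpose_transpose, Matrix.add_mul, Matrix.mul_add, Matrix.neg_mul, Matrix.mul_neg, hBW', hX,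
        Matrix.one_mul]
      have : W.transpose * (X.transpose * W) * B * W = W.transpose * (X.transpose * W) := by
        rw [Matrix.mul_assoc _ B W, hBW, Matrix.mul_one]
      rw [this]
      simp only [Matrix.mul_assoc]
      abel

theorem hyp_equiv (d : ℕ) : ∃ ε : Fin d ⊕ Fin d ≃ Fin (2 * d),
    (∀ i, ((ε (Sum.inl i) : Fin (2 * d)) : ℕ) = 2 * i) ∧
    (∀ i, ((ε (Sum.inr i) : Fin (2 * d)) : ℕ) = 2 * i + 1) := by
  let f : Fin d ⊕ Fin d → Fin (2 * d) :=
    Sum.elim (fun i => ⟨2 * i, by omega⟩) (fun i => ⟨2 * i + 1, by omega⟩)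
  have hf : Function.Bijective f := by
    rw [Fintype.bijective_iff_injective_and_card]
    constructor
    · rintro (i | i) (j | j) h <;> simp [f, Fin.ext_iff] at h ⊢ <;> omega
    · simp; omega
  exact ⟨Equiv.ofBijective f hf, fun i => rfl, fun i => rfl⟩

theorem hyp_submatrix {d : ℕ} (ε : Fin d ⊕ Fin d ≃ Fin (2 * d))
    (h1 : ∀ i, ((ε (Sum.inl i) : Fin (2 * d)) : ℕ) = 2 * i)
    (h2 : ∀ i, ((ε (Sum.inr i) : Fin (2 * d)) : ℕ) = 2 * i + 1) :
    (Matrix.fromBlocks 0 1 1 0 : Matrix (Fin d ⊕ Fin d) (Fin d ⊕ Fin d) ℤ).submatrix ε.symm ε.symm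
      = hyperbolicSum (2 * d) := by
  ext i j
  obtain ⟨s, rfl⟩ := ε.surjective i
  obtain ⟨t, rfl⟩ := ε.surjective j
  simp only [Matrix.submatrix_apply, Equiv.symm_apply_apply, hyperbolicSum]
  rcases s with s | s <;> rcases t with t | t <;> simp only [h1, h2, Matrix.fromBlocks_apply₁₁,
    Matrix.fromBlocks_apply₁₂, Matrix.fromBlocks_apply₂₁, Matrix.fromBlocks_apply₂₂,
    Matrix.zero_apply, Matrix.one_apply, Fin.ext_iff]
  · rw [if_neg]; omega
  · refine if_congr ?_ rfl rfl; omega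
  · refine if_congr ?_ rfl rfl; omega
  · rw [if_neg]; omega

/-- A symmetric integer matrix `A` which is unimodular
(`det A = ±1`), even (all diagonal entries even), and has signature zero
(as many positive as negative eigenvalues of `A` viewed as a real symmetric
matrix) has even size `n = 2m` and is integrally congruent to the direct
sum of `m` copies of `[[0,1],[1,0]]`. -/
theorem stmt1
    (n : ℕ) (A : Matrix (Fin n) (Fin n) ℤ)
    (hsym : A.transpose = A)
    (hdet : A.det = 1 ∨ A.det = -1)
    (heven : ∀ i, Even (A i i))
    (hherm : (A.map ((↑) : ℤ → ℝ)).IsHermitian)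
    (hsig : (Finset.univ.filter fun i => 0 < hherm.eigenvalues i).card =
            (Finset.univ.filter fun i => hherm.eigenvalues i < 0).card) :
    ∃ m : ℕ, n = 2 * m ∧
      ∃ P : Matrix (Fin n) (Fin n) ℤ,
        (P.det = 1 ∨ P.det = -1) ∧ P.transpose * A * P = hyperbolicSum n := by
  obtain ⟨I, hI1, hI2⟩ := metab A hsym hdet hherm hsig
  clear hsig hherm
  have hAu : IsUnit A.det := Int.isUnit_iff.mpr hdet
  obtain ⟨d, e, b, hd, hb⟩ := sat_basis I
  have hAs : (A.map (Int.cast : ℤ → ℚ)).transpose = A.map (Int.cast : ℤ → ℚ) := by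
    rw [← Matrix.transpose_map, hsym]
  have hpol : ∀ x ∈ I, ∀ y ∈ I, dotProduct x ((A.map (Int.cast : ℤ → ℚ)).mulVec y) = 0 := by
    intro x hx y hy
    have h1 := hI2 (x + y) (I.add_mem hx hy)
    have e2 : dotProduct y ((A.map (Int.cast : ℤ → ℚ)).mulVec x) =
        dotProduct x ((A.map (Int.cast : ℤ → ℚ)).mulVec y) := by
      rw [Matrix.dotProduct_mulVec, ← Matrix.mulVec_transpose, hAs, dotProduct_comm]
    rw [Matrix.mulVec_add, dotProduct_add, add_dotProduct, add_dotProduct, hI2 x hx, hI2 y hy,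
      e2] at h1
    linarith
  have hdQ : (A.map (Int.cast : ℤ → ℚ)).det ≠ 0 := by
    have : (A.map (Int.cast : ℤ → ℚ)).det = ((A.det : ℤ) : ℚ) := ((Int.castRingHom ℚ).map_det A).symm
    rw [this]; exact_mod_cast hAu.ne_zero
  have hle := orth_le (Matrix.toLinearMap₂' ℚ (A.map (Int.cast : ℤ → ℚ))) (by
      rw [injective_iff_map_eq_zero]
      intro x hx
      refine Matrix.eq_zero_of_vecMul_eq_zero hdQ ?_
      ext y
      have := congrArg (fun f => f (Pi.single y 1)) hx
      simp [Matrix.toLinearMap₂'_apply'] at this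
      exact this) I I (by
      intro x hx y hy
      rw [Matrix.toLinearMap₂'_apply']
      exact hpol x hx y hy)
  rw [Module.finrank_fintype_fun_eq_card, Fintype.card_fin] at hle
  have hcard : d + e = n := by
    have h1 := Module.finrank_eq_card_basis b
    simp at h1
    exact h1.symm
  have hde : e = d := by omega
  subst hde
  have hn : n = 2 * e := by omega
  subst hn
  refine ⟨e, rfl, ?_⟩
  obtain ⟨ε, hε1, hε2⟩ := hyp_equiv e
  let b' := b.reindex ε
  let P1 : Matrix (Fin (2 * e)) (Fin (2 * e)) ℤ := (Pi.basisFun ℤ (Fin (2 * e))).toMatrix b'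
  have hP1 : IsUnit P1.det := by
    let _ := Module.Basis.invertibleToMatrix (Pi.basisFun ℤ (Fin (2 * e))) b'
    exact Matrix.isUnit_det_of_invertible _
  let M' := P1.transpose * A * P1
  have hM' : ∀ i j, M' i j = dotProduct (b' i) (A.mulVec (b' j)) := by
    intro i j
    simp only [M', Matrix.mul_assoc, Matrix.mul_apply, dotProduct, Matrix.mulVec]
    rfl
  have hM's : M'.transpose = M' := by
    simp [M', Matrix.transpose_mul, hsym, Matrix.mul_assoc]
  obtain ⟨Q, hQ, hQM⟩ := final_block (M'.submatrix ε ε) (by rw [Matrix.transpose_submatrix, hM's])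
    (by
      rw [Matrix.det_submatrix_equiv_self]
      simp only [M', Matrix.det_mul, Matrix.det_transpose]
      exact (hP1.mul hAu).mul hP1)
    (fun i => by
      rw [Matrix.submatrix_apply, hM']
      exact even_val A hsym heven _)
    (fun i j => by
      rw [Matrix.submatrix_apply, hM']
      have h1 := hpol _ (hb i) _ (hb j)
      have h2 : dotProduct (icast _ (b (Sum.inl i))) ((A.map (Int.cast : ℤ → ℚ)).mulVec
          (icast _ (b (Sum.inl j)))) = ((dotProduct (b (Sum.inl i)) (A.mulVec (b (Sum.inl j))) : ℤ) : ℚ) := by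
        simp [dotProduct, Matrix.mulVec, icast]
      rw [h2] at h1
      have h3 : dotProduct (b (Sum.inl i)) (A.mulVec (b (Sum.inl j))) = 0 := by exact_mod_cast h1
      simpa [b'] using h3)
  refine ⟨P1 * Q.submatrix ε.symm ε.symm, ?_, ?_⟩
  · rw [← Int.isUnit_iff, Matrix.det_mul, Matrix.det_submatrix_equiv_self]
    exact hP1.mul hQ
  · rw [← hyp_submatrix ε hε1 hε2, ← hQM]
    have : (P1 * Q.submatrix ε.symm ε.symm).transpose * A * (P1 * Q.submatrix ε.symm ε.symm) =
        (Q.transpose.submatrix ε.symm ε.symm) * M' * Q.submatrix ε.symm ε.symm := by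
      simp [M', Matrix.transpose_mul, Matrix.mul_assoc, Matrix.transpose_submatrix]
    rw [this, ← Matrix.submatrix_mul_equiv _ _ ε.symm ε.symm ε.symm,
      ← Matrix.submatrix_mul_equiv _ _ ε.symm ε.symm ε.symm]
    simp
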